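/- arXiv:math/0209355 — 2 statements merged into one kernel-verified Lean document; each statement's English description precedes it below -/
import Mathlib

section
/- Let $k$ be an algebraically closed field of characteristic $p > 0$, $R_F = k[x,y]/(F)$ where $F \in k[x,y]$ is a product of pairwise non-associate linear forms $\ell_1, \ldots, \ell_s$ (each appearing to the first power), and $q = p^e$. Then the tight closure of the zero submodule in $F^e(R_F/(x,y)R_F) \cong R_F/(x,y)^{[q]}R_F$ is the image of $(x,y)^q$ in $R_F/(x^q,y^q)R_F$, so that $G^e(R_F/(x,y)) \cong R_F/(x,y)^q R_F$. -/
open TensorProduct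

/-- `R` viewed as an `R`-algebra via the `e`-th iterated Frobenius `r ↦ r^(p^e)`. -/
def FrobAlg (R : Type*) (p e : ℕ) : Type _ := R

instance {R : Type*} [CommRing R] {p e : ℕ} : CommRing (FrobAlg R p e) := ‹CommRing R›

noncomputable instance {R : Type*} [CommRing R] {p e : ℕ} [ExpChar R p] :
    Algebra R (FrobAlg R p e) :=
  (show R →+* FrobAlg R p e from iterateFrobenius R p e).toAlgebra

/-- The image `N^{[q]}_M` of `F^e(N)` in the Peskine–Szpiro base change
`F^e(M) = S ⊗_R M` (where `S` is `R` viewed via the `e`-th Frobenius):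
the `S`-submodule generated by the elements `1 ⊗ n`, `n ∈ N`. -/
noncomputable def FrobPow {R : Type*} [CommRing R] (p e : ℕ) [ExpChar R p]
    {M : Type*} [AddCommGroup M] [Module R M] (N : Submodule R M) :
    Submodule (FrobAlg R p e) (TensorProduct R (FrobAlg R p e) M) :=
  Submodule.span (FrobAlg R p e)
    ((fun n => (1 : FrobAlg R p e) ⊗ₜ[R] n) '' (N : Set M))

/-- `R⁰`: the elements of `R` lying in no minimal prime. -/
def RZero (R : Type*) [CommRing R] : Set R := { c | ∀ P ∈ minimalPrimes R, c ∉ P }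

/-- The tight closure `N^*_M`: all `m ∈ M` such that for some `c ∈ R⁰`,
`c·m^q ∈ N^{[q]}_M` for all `q = p^e ≫ 0`. -/
noncomputable def TightClosure (R : Type*) [CommRing R] (p : ℕ) [ExpChar R p]
    {M : Type*} [AddCommGroup M] [Module R M] (N : Submodule R M) : Set M :=
  { m | ∃ c ∈ RZero R, ∃ E : ℕ, ∀ e, E ≤ e →
      (show FrobAlg R p e from c) • ((1 : FrobAlg R p e) ⊗ₜ[R] m) ∈ FrobPow p e N }

open MvPolynomial

lemma frob_criterion {R : Type*} [CommRing R] (p e : ℕ) [ExpChar R p] (I : Ideal R) (c r : R) :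
    (show FrobAlg R p e from c) • ((1 : FrobAlg R p e) ⊗ₜ[R] (Ideal.Quotient.mk I r : R ⧸ I)) ∈
      FrobPow p e (⊥ : Submodule R (R ⧸ I)) ↔
    c * r ^ (p ^ e) ∈ I.map (iterateFrobenius R p e) := by
  have h0 : FrobPow p e (⊥ : Submodule R (R ⧸ I)) = ⊥ := by
    simp [FrobPow]
  rw [h0, Submodule.mem_bot]
  have h1 : (show FrobAlg R p e from c) • ((1 : FrobAlg R p e) ⊗ₜ[R]
      (Ideal.Quotient.mk I r : R ⧸ I)) =
      (show FrobAlg R p e from c) ⊗ₜ[R] (Ideal.Quotient.mk I r : R ⧸ I) := by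
    rw [TensorProduct.smul_tmul', smul_eq_mul, mul_one]
  rw [h1, ← (TensorProduct.tensorQuotEquivQuotSMul (FrobAlg R p e) I).map_eq_zero_iff,
    TensorProduct.tensorQuotEquivQuotSMul_tmul_mk, Submodule.Quotient.mk_eq_zero,
    Ideal.smul_top_eq_map, Submodule.restrictScalars_mem, Algebra.smul_def, mul_comm]
  rfl

lemma pow_mem_pow_mul {R : Type*} [CommRing R] (I : Ideal R) (q : ℕ) {z : R} (hz : z ∈ I ^ q)
    (n : ℕ) : z ^ n ∈ I ^ (q * n) := by
  rw [pow_mul]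
  exact Ideal.pow_mem_pow hz n

lemma colon_pow {R : Type*} [CommRing R] (c x y u : R) (h : c * y = c * (u * x)) (N : ℕ) :
    ∀ z ∈ (Ideal.span {x, y} : Ideal R) ^ N, c * z ∈ Ideal.span {x ^ N} := by
  have h1 : Ideal.span {c} * Ideal.span {x, y} ≤ Ideal.span {c} * Ideal.span {x} := by
    rw [Ideal.span_mul_span', Ideal.span_mul_span', Ideal.span_le]
    rintro _ ⟨c', hc', z, hz, rfl⟩
    rw [Set.mem_singleton_iff] at hc'
    subst hc'
    rw [Set.singleton_mul_singleton, SetLike.mem_coe, Ideal.mem_span_singleton]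
    rcases hz with rfl | hz
    · exact dvd_rfl
    · rw [Set.mem_singleton_iff] at hz
      subst hz
      exact ⟨u, by simp only [h]; ring⟩
  have h2 : ∀ N : ℕ, Ideal.span {c} * Ideal.span {x, y} ^ N ≤
      Ideal.span {c} * Ideal.span {x} ^ N := by
    intro N
    induction N with
    | zero => simp
    | succ n ih =>
      calc Ideal.span {c} * Ideal.span {x, y} ^ (n + 1)
          = (Ideal.span {c} * Ideal.span {x, y} ^ n) * Ideal.span {x, y} := by
            rw [pow_succ, mul_assoc]
        _ ≤ (Ideal.span {c} * Ideal.span {x} ^ n) * Ideal.span {x, y} := Ideal.mul_mono_left ih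
        _ = (Ideal.span {c} * Ideal.span {x, y}) * Ideal.span {x} ^ n := by ring
        _ ≤ (Ideal.span {c} * Ideal.span {x}) * Ideal.span {x} ^ n := Ideal.mul_mono_left h1
        _ = _ := by ring
  intro z hz
  have h3 := h2 N (Ideal.mul_mem_mul (Ideal.mem_span_singleton_self c) hz)
  rw [Ideal.span_singleton_pow] at h3
  exact Ideal.mul_le_right h3

lemma order_bound {k : Type*} [Field k] (p q E : ℕ) (hp : 1 < p) (D G : Polynomial k) (hD : D ≠ 0)
    (h : ∀ e, E ≤ e → (Polynomial.X : Polynomial k) ^ (q * p ^ e) ∣ D * G ^ (p ^ e)) :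
    (Polynomial.X : Polynomial k) ^ q ∣ G := by
  by_cases hG : G = 0
  · simp [hG]
  obtain ⟨G', hG', hnd⟩ := Polynomial.exists_eq_pow_rootMultiplicity_mul_and_not_dvd G hG 0
  rw [map_zero, sub_zero] at hG' hnd
  set m := Polynomial.rootMultiplicity 0 G
  by_cases hm : q ≤ m
  · rw [hG']; exact Dvd.dvd.mul_right (pow_dvd_pow _ hm) _
  exfalso
  push Not at hm
  set e := max E (D.natDegree)
  have he := h e (le_max_left _ _)
  have hX : Prime (Polynomial.X : Polynomial k) := Polynomial.prime_X
  have hlt : D.natDegree < p ^ e :=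
    lt_of_le_of_lt (le_max_right E _) (Nat.lt_pow_self hp)
  have h1 : (Polynomial.X : Polynomial k) ^ ((m + 1) * p ^ e) ∣ D * G ^ (p ^ e) :=
    (pow_dvd_pow _ (Nat.mul_le_mul_right _ hm)).trans he
  have h2 : (Polynomial.X : Polynomial k) ^ (m * p ^ e) * Polynomial.X ^ (p ^ e) ∣
      Polynomial.X ^ (m * p ^ e) * (D * G' ^ (p ^ e)) := by
    have e1 : (Polynomial.X : Polynomial k) ^ (m * p ^ e) * Polynomial.X ^ (p ^ e) =
      Polynomial.X ^ ((m + 1) * p ^ e) := by rw [← pow_add]; ring_nf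
    have e2 : Polynomial.X ^ (m * p ^ e) * (D * G' ^ (p ^ e)) = D * G ^ (p ^ e) := by
      conv_rhs => rw [hG']
      rw [mul_pow, ← pow_mul]; ring
    rw [e1, e2]; exact h1
  have h3 := (mul_dvd_mul_iff_left (pow_ne_zero _ Polynomial.X_ne_zero)).1 h2
  have h4 := hX.pow_dvd_of_dvd_mul_right _ (fun hh => hnd (hX.dvd_of_dvd_pow hh)) h3
  have h5 := Polynomial.natDegree_le_of_dvd h4 hD
  rw [Polynomial.natDegree_X_pow] at h5
  omega

/-- the parametrisation of the line `a x + b y = 0`. -/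
noncomputable def lineMap {k : Type*} [Field k] (a b : k) :
    MvPolynomial (Fin 2) k →ₐ[k] Polynomial k :=
  MvPolynomial.aeval ![Polynomial.C b * Polynomial.X, Polynomial.C (-a) * Polynomial.X]

lemma lineMap_X0 {k : Type*} [Field k] (a b : k) :
    lineMap a b (X 0) = Polynomial.C b * Polynomial.X := by simp [lineMap]

lemma lineMap_X1 {k : Type*} [Field k] (a b : k) :
    lineMap a b (X 1) = Polynomial.C (-a) * Polynomial.X := by simp [lineMap]

lemma lineMap_form {k : Type*} [Field k] (a b c d : k) :
    lineMap a b (C c * X 0 + C d * X 1) = Polynomial.C (c * b - a * d) * Polynomial.X := by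
  rw [map_add, map_mul, map_mul, lineMap_X0, lineMap_X1, ← MvPolynomial.algebraMap_eq,
    AlgHom.commutes, AlgHom.commutes, Polynomial.algebraMap_eq]
  simp only [map_sub, map_mul, map_neg]
  ring

lemma lineMap_ker {k : Type*} [Field k] (a b : k) (hab : ¬(a = 0 ∧ b = 0))
    (f : MvPolynomial (Fin 2) k) :
    lineMap a b f = 0 ↔ (C a * X 0 + C b * X 1) ∣ f := by
  constructor
  · intro h
    obtain ⟨u, v, huv⟩ : ∃ u v : k, b * u - a * v = 1 := by
      by_cases hb : b = 0
      · have ha : a ≠ 0 := fun ha => hab ⟨ha, hb⟩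
        exact ⟨0, -a⁻¹, by simp [ha]⟩
      · exact ⟨b⁻¹, 0, by simp [hb]⟩
    set l : MvPolynomial (Fin 2) k := C a * X 0 + C b * X 1 with hl
    let ψ : Polynomial k →ₐ[k] MvPolynomial (Fin 2) k := Polynomial.aeval (C u * X 0 + C v * X 1)
    let π := Ideal.Quotient.mkₐ k (Ideal.span {l})
    have hC : (C b * C u - C a * C v : MvPolynomial (Fin 2) k) = 1 := by
      rw [← map_mul, ← map_mul, ← map_sub, huv, map_one]
    have key : (π.comp ψ).comp (lineMap a b) = π := by
      apply MvPolynomial.algHom_ext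
      intro i
      have hψC : ∀ c, ψ (Polynomial.C c) = C c := fun c => by
        simp [ψ, MvPolynomial.algebraMap_eq]
      have hψX : ψ Polynomial.X = C u * X 0 + C v * X 1 := by simp [ψ]
      simp only [AlgHom.comp_apply]
      fin_cases i
      · change π (ψ (lineMap a b (X 0))) = π (X 0)
        rw [lineMap_X0, map_mul ψ, hψC, hψX]
        simp only [π, Ideal.Quotient.mkₐ_eq_mk]
        rw [Ideal.Quotient.eq, Ideal.mem_span_singleton]
        exact ⟨C v, by rw [hl]; linear_combination (X 0) * hC⟩
      · change π (ψ (lineMap a b (X 1))) = π (X 1)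
        rw [lineMap_X1, map_mul ψ, hψC, hψX]
        simp only [π, Ideal.Quotient.mkₐ_eq_mk]
        rw [Ideal.Quotient.eq, Ideal.mem_span_singleton]
        exact ⟨-C u, by rw [hl, map_neg]; linear_combination (X 1) * hC⟩
    have h1 : π f = 0 := by
      rw [← key]; simp [h]
    simp only [π, Ideal.Quotient.mkₐ_eq_mk] at h1
    rwa [Ideal.Quotient.eq_zero_iff_mem, Ideal.mem_span_singleton] at h1
  · rintro ⟨g, rfl⟩
    rw [map_mul, lineMap_form, sub_self, map_zero, zero_mul, zero_mul]

lemma form_ne_zero {k : Type*} [Field k] (a b : k) (hab : ¬(a = 0 ∧ b = 0)) :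
    (C a * X 0 + C b * X 1 : MvPolynomial (Fin 2) k) ≠ 0 := by
  intro h
  apply hab
  constructor
  · have := congrArg (MvPolynomial.eval ![1, 0]) h
    simpa using this
  · have := congrArg (MvPolynomial.eval ![0, 1]) h
    simpa using this

lemma form_prime {k : Type*} [Field k] (a b : k) (hab : ¬(a = 0 ∧ b = 0)) :
    Prime (C a * X 0 + C b * X 1 : MvPolynomial (Fin 2) k) := by
  refine ⟨form_ne_zero a b hab, ?_, ?_⟩
  · intro hu
    have := (lineMap_ker a b hab 1).2 hu.dvd
    simp at this
  · intro f g h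
    rw [← lineMap_ker a b hab, map_mul, mul_eq_zero, lineMap_ker a b hab,
      lineMap_ker a b hab] at h
    exact h

lemma lineMap_monomial {k : Type*} [Field k] (a b : k) (m : Fin 2 →₀ ℕ) (c : k) :
    lineMap a b (monomial m c) = Polynomial.monomial m.degree (c * (b ^ m 0 * (-a) ^ m 1)) := by
  rw [lineMap, MvPolynomial.aeval_monomial, Finsupp.prod_fintype _ _ (by simp),
    Finsupp.degree_eq_sum, ← Polynomial.C_mul_X_pow_eq_monomial]
  simp only [Fin.sum_univ_two, Fin.prod_univ_two, Matrix.cons_val_zero, Matrix.cons_val_one,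
    Polynomial.algebraMap_eq, map_mul, map_pow, mul_pow, pow_add]
  ring

lemma lineMap_comp {k : Type*} [Field k] (a b : k) (d : ℕ) (f : MvPolynomial (Fin 2) k) :
    lineMap a b (homogeneousComponent d f) = Polynomial.monomial d ((lineMap a b f).coeff d) := by
  induction f using MvPolynomial.induction_on' with
  | monomial m c =>
    rw [lineMap_monomial, Polynomial.coeff_monomial]
    by_cases h : m.degree = d
    · have : homogeneousComponent d (monomial m c) = monomial m c := by
        ext n
        rw [coeff_homogeneousComponent, coeff_monomial]
        split_ifs <;> simp_all
      rw [this, lineMap_monomial, if_pos h, h]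
    · have : homogeneousComponent d (monomial m c) = 0 := by
        ext n
        rw [coeff_homogeneousComponent, coeff_monomial]
        split_ifs <;> simp_all
      rw [this, if_neg h, map_zero, map_zero]
  | add f g hf hg =>
    rw [map_add, map_add, map_add, Polynomial.coeff_add, map_add, hf, hg]

lemma prod_forms_dvd {k : Type*} [Field k] {s : ℕ} (a b : Fin s → k)
    (hab : ∀ i, ¬(a i = 0 ∧ b i = 0)) (hpair : ∀ i j, i ≠ j → a i * b j ≠ a j * b i)
    (f : MvPolynomial (Fin 2) k) (h : ∀ i, lineMap (a i) (b i) f = 0) :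
    (∏ i, (C (a i) * X 0 + C (b i) * X 1)) ∣ f := by
  apply Fintype.prod_dvd_of_isRelPrime
  · intro i j hij
    change IsRelPrime _ _
    rw [(form_prime _ _ (hab i)).irreducible.isRelPrime_iff_not_dvd, ← lineMap_ker _ _ (hab i),
      lineMap_form]
    simp only [mul_eq_zero, Polynomial.C_eq_zero, Polynomial.X_ne_zero, or_false]
    rw [sub_eq_zero]
    exact (hpair i j hij).symm
  · intro i
    rw [← lineMap_ker _ _ (hab i)]
    exact h i

lemma mem_of_orders {k : Type*} [Field k] {s : ℕ} (a b : Fin s → k)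
    (hab : ∀ i, ¬(a i = 0 ∧ b i = 0)) (hpair : ∀ i j, i ≠ j → a i * b j ≠ a j * b i) (q : ℕ)
    (f : MvPolynomial (Fin 2) k)
    (h : ∀ i, (Polynomial.X : Polynomial k) ^ q ∣ lineMap (a i) (b i) f) :
    ∃ g ∈ (Ideal.span {X 0, X 1} : Ideal (MvPolynomial (Fin 2) k)) ^ q,
      (∏ i, (C (a i) * X 0 + C (b i) * X 1)) ∣ f - g := by
  refine ⟨f - ∑ d ∈ Finset.range q, homogeneousComponent d f, ?_, ?_⟩
  · have hr : (Ideal.span {X 0, X 1} : Ideal (MvPolynomial (Fin 2) k)) = idealOfVars (Fin 2) k := by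
      congr 1
      ext z
      simp [Fin.exists_fin_two, eq_comm]
    rw [hr, mem_pow_idealOfVars_iff']
    intro m hm
    simp [coeff_sum, coeff_homogeneousComponent, hm]
  · rw [sub_sub_cancel]
    apply Finset.dvd_sum
    intro d hd
    apply prod_forms_dvd a b hab hpair
    intro i
    rw [lineMap_comp, (Polynomial.X_pow_dvd_iff.1 (h i)) d (Finset.mem_range.1 hd), map_zero]


/-- For `k` algebraically closed of characteristic `p`, `F ∈ k[x,y]` a product of `s`
pairwise non-associate linear forms, `R_F = k[x,y]/(F)` and `q = p^e`: the tight closure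
of `0` in `F^e(R_F/(x,y)) ≅ R_F/(x^q,y^q)` is the image of `(x,y)^q`. -/
theorem stmt_11 (k : Type*) [Field k] [IsAlgClosed k] (p : ℕ) [Fact p.Prime] [CharP k p]
    (e : ℕ) (he : 1 ≤ e) (q : ℕ) (hq : q = p ^ e)
    (s : ℕ) (hs1 : 1 ≤ s) (hsq : s ≤ q)
    (a b : Fin s → k) (hab : ∀ i, ¬(a i = 0 ∧ b i = 0))
    (hpair : ∀ i j, i ≠ j → a i * b j ≠ a j * b i)
    (F : MvPolynomial (Fin 2) k)
    (hF : F = ∏ i, (C (a i) * X 0 + C (b i) * X 1))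
    [CharP (MvPolynomial (Fin 2) k ⧸ Ideal.span {F}) p]
    (Iq : Ideal (MvPolynomial (Fin 2) k ⧸ Ideal.span {F}))
    (hIq : Iq = Ideal.span
      {Ideal.Quotient.mk (Ideal.span {F}) (X 0 : MvPolynomial (Fin 2) k) ^ q,
       Ideal.Quotient.mk (Ideal.span {F}) (X 1 : MvPolynomial (Fin 2) k) ^ q}) :
    TightClosure (MvPolynomial (Fin 2) k ⧸ Ideal.span {F}) p
        (⊥ : Submodule (MvPolynomial (Fin 2) k ⧸ Ideal.span {F})
          ((MvPolynomial (Fin 2) k ⧸ Ideal.span {F}) ⧸ Iq)) =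
      ((Ideal.map (Ideal.Quotient.mk Iq)
        ((Ideal.span {Ideal.Quotient.mk (Ideal.span {F}) (X 0 : MvPolynomial (Fin 2) k),
          Ideal.Quotient.mk (Ideal.span {F}) (X 1 : MvPolynomial (Fin 2) k)}) ^ q)) :
        Set ((MvPolynomial (Fin 2) k ⧸ Ideal.span {F}) ⧸ Iq)) := by
  set L : Fin s → MvPolynomial (Fin 2) k := fun i => C (a i) * X 0 + C (b i) * X 1 with hL
  set π := Ideal.Quotient.mk (Ideal.span {F}) with hπ
  have hp1 : 1 < p := (Fact.out : p.Prime).one_lt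
  have hFL : F = ∏ i, L i := hF
  -- the induced maps on the quotient
  have hφF : ∀ i, ∀ f ∈ Ideal.span {F}, (lineMap (a i) (b i)).toRingHom f = 0 := by
    intro i f hf
    rw [Ideal.mem_span_singleton, hFL] at hf
    exact (lineMap_ker _ _ (hab i) f).2 ((Finset.dvd_prod_of_mem L (Finset.mem_univ i)).trans hf)
  let φ : ∀ i, (MvPolynomial (Fin 2) k ⧸ Ideal.span {F}) →+* Polynomial k := fun i =>
    Ideal.Quotient.lift _ (lineMap (a i) (b i)).toRingHom (hφF i)
  have hφ : ∀ i f, φ i (π f) = lineMap (a i) (b i) f := fun i f => rfl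
  -- a prime contains the kernel of one of these maps
  have hker : ∀ i, ∀ P : Ideal (MvPolynomial (Fin 2) k ⧸ Ideal.span {F}), π (L i) ∈ P →
      RingHom.ker (φ i) ≤ P := by
    intro i P hP z hz
    obtain ⟨f, rfl⟩ := Ideal.Quotient.mk_surjective z
    rw [RingHom.mem_ker] at hz
    obtain ⟨g, rfl⟩ := (lineMap_ker _ _ (hab i) f).1 hz
    rw [map_mul]
    exact P.mul_mem_right _ hP
  have hprime : ∀ P : Ideal (MvPolynomial (Fin 2) k ⧸ Ideal.span {F}), P.IsPrime →
      ∃ i, π (L i) ∈ P := by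
    intro P hP
    have h0 : ∏ i, π (L i) = 0 := by
      rw [← map_prod, ← hFL, Ideal.Quotient.eq_zero_iff_mem]
      exact Ideal.mem_span_singleton_self _
    have : ∏ i, π (L i) ∈ P := by rw [h0]; exact P.zero_mem
    obtain ⟨i, -, hi⟩ := (hP.prod_mem_iff).1 this
    exact ⟨i, hi⟩
  have hφL : ∀ i j, i ≠ j → φ i (π (L j)) ≠ 0 := by
    intro i j hij
    rw [hφ, hL]
    simp only
    rw [lineMap_form]
    simp only [ne_eq, mul_eq_zero, Polynomial.C_eq_zero, Polynomial.X_ne_zero, or_false]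
    rw [sub_eq_zero]
    exact (hpair i j hij).symm
  have hmin : ∀ i, RingHom.ker (φ i) ∈ minimalPrimes (MvPolynomial (Fin 2) k ⧸ Ideal.span {F}) := by
    intro i
    have : (RingHom.ker (φ i)).IsPrime := RingHom.ker_isPrime _
    obtain ⟨P, hP, hle⟩ := Ideal.exists_minimalPrimes_le (I := ⊥) (J := RingHom.ker (φ i)) bot_le
    obtain ⟨j, hj⟩ := hprime P hP.1.1
    have hij : i = j := by
      by_contra hij
      exact hφL i j hij (hle hj)
    subst hij
    rw [le_antisymm (hker i P hj) hle]
    exact hP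
  have hmap : ∀ e', Iq.map (iterateFrobenius (MvPolynomial (Fin 2) k ⧸ Ideal.span {F}) p e') =
      Ideal.span {π (X 0) ^ (q * p ^ e'), π (X 1) ^ (q * p ^ e')} := by
    intro e'
    rw [hIq, Ideal.map_span, Set.image_pair, iterateFrobenius_def, iterateFrobenius_def,
      ← pow_mul, ← pow_mul]
  ext m
  obtain ⟨r, rfl⟩ := Ideal.Quotient.mk_surjective m
  constructor
  · rintro ⟨c, hc, E, h⟩
    obtain ⟨f, rfl⟩ := Ideal.Quotient.mk_surjective r
    have hord : ∀ i, (Polynomial.X : Polynomial k) ^ q ∣ lineMap (a i) (b i) f := by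
      intro i
      apply order_bound p q E hp1 (φ i c) _ (fun h0 => hc _ (hmin i) h0)
      intro e' he'
      have h1 := (frob_criterion p e' Iq c (π f)).1 (h e' he')
      rw [hmap, Ideal.mem_span_pair] at h1
      obtain ⟨u, v, huv⟩ := h1
      have h2 := congrArg (φ i) huv
      simp only [map_add, map_mul, map_pow, hφ, lineMap_X0, lineMap_X1] at h2
      rw [← h2, mul_pow, mul_pow]
      apply dvd_add
      · exact Dvd.dvd.mul_left (Dvd.dvd.mul_left dvd_rfl _) _
      · exact Dvd.dvd.mul_left (Dvd.dvd.mul_left dvd_rfl _) _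
    obtain ⟨g, hg, hd⟩ := mem_of_orders a b hab hpair q f hord
    have hfg : π f = π g := by
      rw [Ideal.Quotient.eq, Ideal.mem_span_singleton]
      rw [hF]
      exact hd
    apply Ideal.mem_map_of_mem
    change π f ∈ _
    rw [hfg]
    have := Ideal.mem_map_of_mem π hg
    rwa [Ideal.map_pow, Ideal.map_span, Set.image_pair] at this
  · intro hm
    obtain ⟨r', hr', hrr⟩ := (Ideal.mem_map_iff_of_surjective _ Ideal.Quotient.mk_surjective).1 hm
    rw [← hrr]
    let c : Fin s → MvPolynomial (Fin 2) k ⧸ Ideal.span {F} := fun i =>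
      ∏ j ∈ Finset.univ.erase i, π (L j)
    have hcL : ∀ i, c i * π (L i) = 0 := by
      intro i
      rw [Finset.prod_erase_mul _ _ (Finset.mem_univ i), ← map_prod,
        ← hFL, Ideal.Quotient.eq_zero_iff_mem]
      exact Ideal.mem_span_singleton_self _
    refine ⟨∑ i, c i, ?_, 0, ?_⟩
    · intro P hP hcP
      obtain ⟨i, hi⟩ := hprime P hP.1.1
      have : (RingHom.ker (φ i)).IsPrime := RingHom.ker_isPrime _
      have hle : P ≤ RingHom.ker (φ i) := hP.2 ⟨this, bot_le⟩ (hker i P hi)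
      have h0 : φ i (∑ i, c i) = 0 := hle hcP
      rw [map_sum, Finset.sum_eq_single i, map_prod, Finset.prod_eq_zero_iff] at h0
      · obtain ⟨j, hj, hj0⟩ := h0
        exact hφL i j (Finset.ne_of_mem_erase hj).symm hj0
      · intro j _ hji
        rw [map_prod]
        apply Finset.prod_eq_zero (i := i)
        · exact Finset.mem_erase.2 ⟨hji.symm, Finset.mem_univ _⟩
        · rw [hφ]
          exact (lineMap_ker _ _ (hab i) _).2 dvd_rfl
      · intro h; exact absurd (Finset.mem_univ _) h
    · intro e' _
      rw [frob_criterion, hmap, Finset.sum_mul]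
      apply Ideal.sum_mem
      intro i _
      have hz : r' ^ (p ^ e') ∈ (Ideal.span {π (X 0), π (X 1)}) ^ (q * p ^ e') := by
        exact pow_mem_pow_mul _ _ hr' _
      have hLi := hcL i
      simp only [hL, map_add, map_mul] at hLi
      by_cases hb : b i = 0
      · have ha : a i ≠ 0 := fun ha => hab i ⟨ha, hb⟩
        have hu : π (C (a i)⁻¹) * π (C (a i)) = 1 := by
          rw [← map_mul, ← map_mul, inv_mul_cancel₀ ha, map_one, map_one]
        rw [Set.pair_comm] at hz
        have := colon_pow (c i) (π (X 1)) (π (X 0)) (-(π (C (a i)⁻¹) * π (C (b i))))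
          (by linear_combination π (C (a i)⁻¹) * hLi - c i * π (X 0) * hu) _ _ hz
        exact Ideal.span_mono (by simp) this
      · have hu : π (C (b i)⁻¹) * π (C (b i)) = 1 := by
          rw [← map_mul, ← map_mul, inv_mul_cancel₀ hb, map_one, map_one]
        have := colon_pow (c i) (π (X 0)) (π (X 1)) (-(π (C (b i)⁻¹) * π (C (a i))))
          (by linear_combination π (C (b i)⁻¹) * hLi - c i * π (X 1) * hu) _ _ hz
        exact Ideal.span_mono (by simp) this
end

section
/- Let $k$ be a field of characteristic $p > 0$ and $F = xy(x-y)(x-ty) \in k[t][x,y]$, with $R_F = k[t][x,y]/(F)$ and $M_F = R_F/(x,y)R_F$. The set $\bigcup_{e \geq 1} \mathrm{Ass}_{R_F}\, F^e(M_F) = \bigcup_{e \geq 1} \mathrm{Ass}_{R_F}\, R_F/(x^{p^e}, y^{p^e})R_F$ has infinitely many maximal elements. -/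
open MvPolynomial

/-- The geometric sum `1 + t + ... + t^(n-1)`. -/
noncomputable def aux12c (k : Type*) [Field k] (n : ℕ) : Polynomial k :=
  ∑ l ∈ Finset.range n, Polynomial.X ^ l

/-- The values of the functional on monomials. -/
noncomputable def aux12f (k : Type*) [Field k] (q i j : ℕ) : Polynomial k :=
  if i + j = q + 1 ∧ i ≤ q then aux12c k (i - 1) else 0

noncomputable def aux12phi (k : Type*) [Field k] (q : ℕ) :
    MvPolynomial (Fin 2) (Polynomial k) →ₗ[Polynomial k] Polynomial k :=
  (basisMonomials (Fin 2) (Polynomial k)).constr (Polynomial k)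
    (fun d => aux12f k q (d 0) (d 1))

lemma aux12_mon (k : Type*) [Field k] (d : Fin 2 →₀ ℕ) :
    (monomial d 1 : MvPolynomial (Fin 2) (Polynomial k)) = X 0 ^ d 0 * X 1 ^ d 1 := by
  rw [monomial_eq, Finsupp.prod_fintype]
  · simp
  · simp

lemma aux12phi_apply (k : Type*) [Field k] (q i j : ℕ) :
    aux12phi k q (X 0 ^ i * X 1 ^ j) = aux12f k q i j := by
  have h := aux12_mon k (Finsupp.single 0 i + Finsupp.single 1 j)
  simp at h
  rw [← h]
  have h2 := (basisMonomials (Fin 2) (Polynomial k)).constr_basis (Polynomial k)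
    (fun d => aux12f k q (d 0) (d 1)) (Finsupp.single 0 i + Finsupp.single 1 j)
  simp only [coe_basisMonomials] at h2
  rw [aux12phi, h2]
  simp

lemma aux12_rec (k : Type*) [Field k] (n : ℕ) :
    aux12c k (n + 2) = (1 + Polynomial.X) * aux12c k (n + 1) - Polynomial.X * aux12c k n := by
  simp only [aux12c, Finset.sum_range_succ]
  ring

/-- A linear map whose values on multiples of monomials are divisible by `a`. -/
lemma aux12_lin (k : Type*) [Field k] (q : ℕ) (a : Polynomial k)
    (G : MvPolynomial (Fin 2) (Polynomial k))
    (h : ∀ i j : ℕ, a ∣ aux12phi k q (G * (X 0 ^ i * X 1 ^ j)))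
    (s : MvPolynomial (Fin 2) (Polynomial k)) : a ∣ aux12phi k q (G * s) := by
  induction s using MvPolynomial.induction_on' with
  | monomial d b =>
    have : (monomial d b : MvPolynomial (Fin 2) (Polynomial k)) = b • monomial d 1 := by
      simp [smul_monomial]
    rw [this, aux12_mon, mul_smul_comm, map_smul, smul_eq_mul]
    exact Dvd.dvd.mul_left (h _ _) _
  | add p r hp hr =>
    rw [mul_add, map_add]
    exact dvd_add hp hr

lemma aux12_kill (k : Type*) [Field k] (q : ℕ) (hq : 2 ≤ q)
    (s : MvPolynomial (Fin 2) (Polynomial k))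
    (hs : s ∈ Ideal.span {(X 0 : MvPolynomial (Fin 2) (Polynomial k)) ^ q, X 1 ^ q} ⊔
      Ideal.span {X 0 * X 1 * (X 0 - X 1) * (X 0 - C Polynomial.X * X 1)}) :
    aux12c k (q - 1) ∣ aux12phi k q s := by
  obtain ⟨u, hu, v, hv, rfl⟩ := Submodule.mem_sup.1 hs
  obtain ⟨a, b, rfl⟩ := Ideal.mem_span_pair.1 hu
  obtain ⟨c, rfl⟩ := Ideal.mem_span_singleton.1 hv
  rw [map_add, map_add]
  refine dvd_add (dvd_add ?_ ?_) ?_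
  · rw [mul_comm]
    refine aux12_lin k q _ _ (fun i j => ?_) a
    rw [show (X 0 : MvPolynomial (Fin 2) (Polynomial k)) ^ q * (X 0 ^ i * X 1 ^ j)
      = X 0 ^ (q + i) * X 1 ^ j by ring, aux12phi_apply, aux12f]
    split_ifs with h
    · obtain rfl : i = 0 := by omega
      simp
    · simp
  · rw [mul_comm]
    refine aux12_lin k q _ _ (fun i j => ?_) b
    rw [show (X 1 : MvPolynomial (Fin 2) (Polynomial k)) ^ q * (X 0 ^ i * X 1 ^ j)
      = X 0 ^ i * X 1 ^ (q + j) by ring, aux12phi_apply, aux12f]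
    split_ifs with h
    · have : i - 1 = 0 := by omega
      simp [this, aux12c]
    · simp
  · refine aux12_lin k q _ _ (fun i j => ?_) c
    rw [show (X 0 : MvPolynomial (Fin 2) (Polynomial k)) * X 1 * (X 0 - X 1) *
        (X 0 - C Polynomial.X * X 1) * (X 0 ^ i * X 1 ^ j)
      = X 0 ^ (i + 3) * X 1 ^ (j + 1) - C (1 + Polynomial.X) * (X 0 ^ (i + 2) * X 1 ^ (j + 2))
        + C Polynomial.X * (X 0 ^ (i + 1) * X 1 ^ (j + 3)) by
        simp only [map_add, map_one]; ring, ← smul_eq_C_mul, ← smul_eq_C_mul, map_add, map_sub,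
        map_smul, map_smul, aux12phi_apply, aux12phi_apply, aux12phi_apply]
    by_cases h : i + j + 3 = q
    · rw [aux12f, aux12f, aux12f, if_pos (by omega), if_pos (by omega), if_pos (by omega)]
      have := aux12_rec k i
      simp only [smul_eq_mul]
      rw [show i + 3 - 1 = i + 2 by omega, show i + 2 - 1 = i + 1 by omega,
        show i + 1 - 1 = i by omega, this]
      ring_nf
      simp
    · rw [aux12f, aux12f, aux12f, if_neg (by omega), if_neg (by omega), if_neg (by omega)]
      simp

lemma aux12_ann (k : Type*) [Field k] (q : ℕ) (hq : 2 ≤ q)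
    (I : Ideal (MvPolynomial (Fin 2) (Polynomial k)))
    (hI : I = Ideal.span {(X 0 : MvPolynomial (Fin 2) (Polynomial k)) ^ q, X 1 ^ q} ⊔
      Ideal.span {X 0 * X 1 * (X 0 - X 1) * (X 0 - C Polynomial.X * X 1)}) :
    X 0 * (X 0 ^ 2 * X 1 ^ (q - 1)) ∈ I ∧ X 1 * (X 0 ^ 2 * X 1 ^ (q - 1)) ∈ I ∧
    C (aux12c k (q - 1)) * (X 0 ^ 2 * X 1 ^ (q - 1)) ∈ I := by
  have hx : X 0 ^ q ∈ I := hI ▸ Ideal.mem_sup_left (Ideal.subset_span (by simp))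
  have hy : X 1 ^ q ∈ I := hI ▸ Ideal.mem_sup_left (Ideal.subset_span (by simp))
  have hF : X 0 * X 1 * (X 0 - X 1) * (X 0 - C Polynomial.X * X 1) ∈ I :=
    hI ▸ Ideal.mem_sup_right (Ideal.subset_span (by simp))
  obtain ⟨n, rfl⟩ : ∃ n, q = n + 2 := ⟨q - 2, by omega⟩
  clear hI
  rw [show n + 2 - 1 = n + 1 by omega]
  refine ⟨?_, ?_, ?_⟩
  · have := I.add_mem (I.mul_mem_left (X 1 ^ n) hF) (I.mul_mem_left
      (C (1 + Polynomial.X) * X 0 ^ 2 - C Polynomial.X * X 0 * X 1) hy)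
    convert this using 1
    simp only [map_add, map_one]
    ring
  · convert I.mul_mem_left (X 0 ^ 2) hy using 1
    ring
  · have key : ∀ i, i ≤ n →
        (X 0 ^ (i + 1) * X 1 ^ (n + 2 - i) - C (aux12c k i) * (X 0 ^ 2 * X 1 ^ (n + 1)) ∈ I ∧
        X 0 ^ (i + 2) * X 1 ^ (n + 1 - i) - C (aux12c k (i + 1)) * (X 0 ^ 2 * X 1 ^ (n + 1)) ∈ I) := by
      intro i
      induction i with
      | zero =>
        intro _
        refine ⟨?_, ?_⟩
        · simpa [aux12c] using I.mul_mem_left _ hy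
        · simp [aux12c]
      | succ i ih =>
        intro hi
        obtain ⟨h1, h2⟩ := ih (by omega)
        obtain ⟨m, rfl⟩ : ∃ m, n = m + i + 1 := ⟨n - i - 1, by omega⟩
        rw [show m + i + 1 + 2 - i = m + 3 by omega] at h1
        rw [show m + i + 1 + 1 - i = m + 2 by omega] at h2
        rw [show m + i + 1 + 2 - (i + 1) = m + 2 by omega,
          show m + i + 1 + 1 - (i + 1) = m + 1 by omega]
        refine ⟨h2, ?_⟩
        have := I.add_mem (I.mul_mem_left (X 0 ^ i * X 1 ^ m) hF) (I.sub_mem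
          (I.mul_mem_left (C (1 + Polynomial.X)) h2) (I.mul_mem_left (C Polynomial.X) h1))
        convert this using 1
        rw [show i + 1 + 1 = i + 2 by omega, aux12_rec]
        simp only [map_add, map_one, map_mul, map_sub]
        ring
    have h := (key n le_rfl).2
    rw [show n + 1 - n = 1 by omega] at h
    have := I.sub_mem (I.mul_mem_left (X 1) hx) h
    convert this using 1
    ring

lemma aux12_phiw (k : Type*) [Field k] (q : ℕ) (hq : 2 ≤ q) (a : Polynomial k) :
    aux12phi k q (C a * (X 0 ^ 2 * X 1 ^ (q - 1))) = a := by
  rw [← smul_eq_C_mul, map_smul, aux12phi_apply, aux12f, if_pos (by omega)]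
  simp [aux12c]

lemma aux12_const (k : Type*) [Field k] (s : MvPolynomial (Fin 2) (Polynomial k)) :
    ∃ u v, s = C (constantCoeff s) + u * X 0 + v * X 1 := by
  induction s using MvPolynomial.induction_on with
  | C a => exact ⟨0, 0, by simp⟩
  | add a b ha hb =>
    obtain ⟨u, v, h⟩ := ha
    obtain ⟨u', v', h'⟩ := hb
    refine ⟨u + u', v + v', ?_⟩
    conv_lhs => rw [h, h']
    simp only [map_add]
    ring
  | mul_X a i _ =>
    fin_cases i
    · exact ⟨a, 0, by simp⟩
    · exact ⟨0, a, by simp⟩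

lemma aux12_core (k : Type*) [Field k] (q : ℕ) (hq : 2 ≤ q)
    (I : Ideal (MvPolynomial (Fin 2) (Polynomial k)))
    (hI : I = Ideal.span {(X 0 : MvPolynomial (Fin 2) (Polynomial k)) ^ q, X 1 ^ q} ⊔
      Ideal.span {X 0 * X 1 * (X 0 - X 1) * (X 0 - C Polynomial.X * X 1)})
    (g h : Polynomial k) (hh : h ≠ 0) (hgh : aux12c k (q - 1) = g * h)
    (s : MvPolynomial (Fin 2) (Polynomial k)) :
    s * (C h * (X 0 ^ 2 * X 1 ^ (q - 1))) ∈ I ↔ g ∣ constantCoeff s := by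
  obtain ⟨hx, hy, ht⟩ := aux12_ann k q hq I hI
  obtain ⟨u, v, huv⟩ := aux12_const k s
  have e : s * (C h * (X 0 ^ 2 * X 1 ^ (q - 1))) =
      C (constantCoeff s * h) * (X 0 ^ 2 * X 1 ^ (q - 1)) +
      (u * C h * (X 0 * (X 0 ^ 2 * X 1 ^ (q - 1))) +
      v * C h * (X 1 * (X 0 ^ 2 * X 1 ^ (q - 1)))) := by
    conv_lhs => rw [huv]
    simp only [map_mul]
    ring
  rw [e, Ideal.add_mem_iff_left I
    (I.add_mem (I.mul_mem_left _ hx) (I.mul_mem_left _ hy))]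
  constructor
  · intro hm
    rw [hI] at hm
    have := aux12_kill k q hq _ hm
    rw [aux12_phiw k q hq, hgh] at this
    exact (mul_dvd_mul_iff_right hh).1 this
  · rintro ⟨c, hc⟩
    rw [hc, show g * c * h = c * (g * h) by ring, ← hgh, map_mul, mul_assoc]
    exact I.mul_mem_left _ ht

lemma aux12_mul (k : Type*) [Field k] (n : ℕ) :
    aux12c k n * (Polynomial.X - 1) = Polynomial.X ^ n - 1 := by
  rw [aux12c]; exact geom_sum_mul _ _

lemma aux12_sqf (k : Type*) [Field k] (N : Polynomial k) (a : Polynomial k) (ha : a ≠ 0)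
    (hs : Squarefree a) (h : ∀ g, Irreducible g → g ∣ a → g ∣ N) : a ∣ N := by
  induction a using WfDvdMonoid.induction_on_irreducible with
  | zero => exact absurd rfl ha
  | unit u hu => exact hu.dvd
  | mul b i hb hi ih =>
    have h1 := ih hb (hs.squarefree_of_dvd (Dvd.intro_left _ rfl))
      (fun g hg hgb => h g hg (hgb.mul_left _))
    refine IsCoprime.mul_dvd ?_ (h i hi (Dvd.intro _ rfl)) h1
    refine (hi.coprime_iff_not_dvd).2 ?_
    intro hib
    exact hi.not_isUnit (hs i (mul_dvd_mul_left i hib))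

lemma aux12_inf (k : Type*) [Field k] (p : ℕ) [Fact p.Prime] [CharP k p] :
    {I : Ideal (Polynomial k) | ∃ e : ℕ, 1 ≤ e ∧ ∃ g, Irreducible g ∧
      g ∣ aux12c k (p ^ e - 1) ∧ I = Ideal.span {g}}.Infinite := by
  intro hfin
  set N : Polynomial k := ∏ I ∈ hfin.toFinset, Submodule.IsPrincipal.generator I with hN
  have hN0 : N ≠ 0 := by
    rw [hN, Finset.prod_ne_zero_iff]
    intro I hI h0
    rw [Set.Finite.mem_toFinset] at hI
    obtain ⟨e, he, g, hg, -, rfl⟩ := hI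
    rw [← Submodule.IsPrincipal.eq_bot_iff_generator_eq_zero] at h0
    exact hg.ne_zero (by simpa using h0)
  have hp : p.Prime := Fact.out
  set e := N.natDegree + 2 with he
  have hlt : e < p ^ e := Nat.lt_pow_self hp.one_lt
  have hmul := aux12_mul k (p ^ e - 1)
  have hsep : (Polynomial.X ^ (p ^ e - 1) - 1 : Polynomial k).Separable := by
    rw [Polynomial.X_pow_sub_one_separable_iff]
    rw [Nat.cast_sub (by omega), Nat.cast_pow, CharP.cast_eq_zero]
    simp [he]
  have hne : (Polynomial.X ^ (p ^ e - 1) - 1 : Polynomial k) ≠ 0 := hsep.ne_zero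
  have ha : aux12c k (p ^ e - 1) ≠ 0 := by
    intro h; rw [h, zero_mul] at hmul; exact hne hmul.symm
  have hdvd : aux12c k (p ^ e - 1) ∣ N := by
    apply aux12_sqf k N _ ha (hsep.squarefree.squarefree_of_dvd ⟨_, hmul.symm⟩)
    intro g hg hga
    have hmem : Ideal.span {g} ∈ hfin.toFinset := by
      rw [Set.Finite.mem_toFinset]
      exact ⟨e, by omega, g, hg, hga, rfl⟩
    refine dvd_trans ?_ (Finset.dvd_prod_of_mem _ hmem)
    rw [← Ideal.mem_span_singleton]
    exact Submodule.IsPrincipal.generator_mem _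
  have hd := Polynomial.natDegree_le_of_dvd hdvd hN0
  have h3 := congrArg Polynomial.natDegree hmul
  have hX : (Polynomial.X - 1 : Polynomial k) = Polynomial.X - Polynomial.C 1 := by simp
  have hXn : (Polynomial.X ^ (p ^ e - 1) - 1 : Polynomial k) =
    Polynomial.X ^ (p ^ e - 1) - Polynomial.C 1 := by simp
  rw [Polynomial.natDegree_mul ha (hX ▸ Polynomial.X_sub_C_ne_zero 1), hXn,
    Polynomial.natDegree_X_pow_sub_C, hX, Polynomial.natDegree_X_sub_C] at h3
  omega

lemma aux12_gen {S R B : Type*} [CommRing S] [CommRing R] [CommRing B] (f : S →+* R)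
    (hsurj : Function.Surjective f) (J : Ideal R) (w : S) (c : S →+* B)
    (hc : Function.Surjective c) (M : Ideal B) (hM : M.IsMaximal)
    (hcore : ∀ s, f (s * w) ∈ J ↔ c s ∈ M) :
    ∃ P : Ideal R, P.IsMaximal ∧ P ∈ associatedPrimes R (R ⧸ J) ∧ ∀ s, f s ∈ P ↔ c s ∈ M := by
  set m := Ideal.Quotient.mk J (f w) with hm
  set P := Submodule.colon (⊥ : Submodule R (R ⧸ J)) {m} with hP
  have hPmem : ∀ s, f s ∈ P ↔ c s ∈ M := by
    intro s
    rw [hP, Submodule.mem_colon_singleton, Submodule.mem_bot, hm, ← hcore,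
      map_mul, ← Ideal.Quotient.eq_zero_iff_mem, map_mul]
    rfl
  have hcomap : Ideal.comap f P = Ideal.comap c M := by
    ext s
    rw [Ideal.mem_comap, hPmem, Ideal.mem_comap]
  have hmax' : (Ideal.comap f P).IsMaximal := by
    rw [hcomap]
    exact Ideal.comap_isMaximal_of_surjective _ hc
  have hPmax : P.IsMaximal := by
    rcases Ideal.map_eq_top_or_isMaximal_of_surjective f hsurj hmax' with h1 | h1
    · rw [Ideal.map_comap_of_surjective _ hsurj] at h1
      rw [h1, Ideal.comap_top] at hmax'
      exact absurd rfl hmax'.ne_top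
    · rwa [Ideal.map_comap_of_surjective _ hsurj] at h1
  exact ⟨P, hPmax, ⟨hPmax.isPrime, m, (hPmax.isPrime.radical).symm⟩, hPmem⟩

lemma aux12_gen2 {S B : Type*} [CommRing S] [CommRing B] (F x y w : S) (c : S →+* B)
    (hc : Function.Surjective c) (M : Ideal B) (hM : M.IsMaximal)
    (hcore : ∀ s, s * w ∈ Ideal.span {x, y} ⊔ Ideal.span {F} ↔ c s ∈ M) :
    ∃ P : Ideal (S ⧸ Ideal.span {F}), P.IsMaximal ∧
      P ∈ associatedPrimes (S ⧸ Ideal.span {F}) ((S ⧸ Ideal.span {F}) ⧸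
        Ideal.span {Ideal.Quotient.mk (Ideal.span {F}) x, Ideal.Quotient.mk (Ideal.span {F}) y}) ∧
      ∀ s, Ideal.Quotient.mk (Ideal.span {F}) s ∈ P ↔ c s ∈ M := by
  refine aux12_gen (Ideal.Quotient.mk (Ideal.span {F})) Ideal.Quotient.mk_surjective _ w c hc M hM
    (fun s => ?_)
  rw [← hcore, ← Ideal.mem_quotient_iff_mem_sup, Ideal.map_span, Set.image_pair]

set_option maxHeartbeats 4000000

/-- For `k` of characteristic `p > 0`, `R_F = k[t][x,y]/(xy(x-y)(x-ty))` and
`M_F = R_F/(x,y)`, the set `⋃_{e ≥ 1} Ass_{R_F} F^e(M_F) = ⋃_{e ≥ 1} Ass R_F/(x^{p^e},y^{p^e})`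
has infinitely many maximal elements. -/
theorem stmt_12 (k : Type*) [Field k] (p : ℕ) [Fact p.Prime] [CharP k p]
    (F : MvPolynomial (Fin 2) (Polynomial k))
    (hF : F = X 0 * X 1 * (X 0 - X 1) * (X 0 - C Polynomial.X * X 1))
    (𝒜 : Set (Ideal (MvPolynomial (Fin 2) (Polynomial k) ⧸ Ideal.span {F})))
    (h𝒜 : 𝒜 = { P | ∃ e : ℕ, 1 ≤ e ∧
        P ∈ associatedPrimes
          (MvPolynomial (Fin 2) (Polynomial k) ⧸ Ideal.span {F})
          ((MvPolynomial (Fin 2) (Polynomial k) ⧸ Ideal.span {F}) ⧸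
            Ideal.span
              {Ideal.Quotient.mk (Ideal.span {F}) (X 0 : MvPolynomial (Fin 2) (Polynomial k)) ^ p ^ e,
               Ideal.Quotient.mk (Ideal.span {F}) (X 1 : MvPolynomial (Fin 2) (Polynomial k)) ^ p ^ e}) }) :
    { P ∈ 𝒜 | ∀ Q ∈ 𝒜, P ≤ Q → P = Q }.Infinite := by
  set mkF := Ideal.Quotient.mk (Ideal.span {F}) with hmk
  have hsurj : Function.Surjective mkF := Ideal.Quotient.mk_surjective
  intro hfin
  refine aux12_inf k p ((hfin.image (fun P => Ideal.comap (mkF.comp C) P)).subset ?_)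
  rintro _ ⟨e, he, g, hg, ⟨h, hgh⟩, rfl⟩
  have hp : p.Prime := Fact.out
  have hq : 2 ≤ p ^ e := by
    have := Nat.lt_pow_self hp.one_lt (n := e)
    omega
  have hh : h ≠ 0 := by
    rintro rfl
    have h1 := aux12_mul k (p ^ e - 1)
    rw [hgh, mul_zero, zero_mul] at h1
    have h2 : (Polynomial.X ^ (p ^ e - 1) - Polynomial.C 1 : Polynomial k) ≠ 0 :=
      Polynomial.X_pow_sub_C_ne_zero (by omega) 1
    exact h2 (by simpa using h1.symm)
  have hcore := aux12_core k (p ^ e) hq _ rfl g h hh hgh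
  rw [← hF] at hcore
  have hgmax : (Ideal.span {g}).IsMaximal := PrincipalIdealRing.isMaximal_of_irreducible hg
  have hcs : Function.Surjective
      (constantCoeff : MvPolynomial (Fin 2) (Polynomial k) →+* Polynomial k) :=
    fun a => ⟨C a, by simp⟩
  obtain ⟨P, hPmax, hPass, hPmem⟩ := aux12_gen2 F (X 0 ^ p ^ e) (X 1 ^ p ^ e) _ constantCoeff hcs
    (Ideal.span {g}) hgmax (fun s => (hcore s).trans Ideal.mem_span_singleton.symm)
  rw [map_pow, map_pow] at hPass
  refine ⟨P, ⟨?_, ?_⟩, ?_⟩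
  · rw [h𝒜]
    exact ⟨e, he, hPass⟩
  · intro Q hQ hPQ
    rw [h𝒜] at hQ
    obtain ⟨e', -, hQ⟩ := hQ
    exact hPmax.eq_of_le hQ.1.ne_top hPQ
  · ext a
    simp only [Ideal.mem_comap, RingHom.comp_apply]
    rw [hPmem, constantCoeff_C]
end
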